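/- For every f ∈ S(ℝ) and every (φ, ψ) ∈ ℝ², one has Φ(x·f)(φ, ψ) = φ·Φf(φ, ψ) − i(θ/(2π))·(∂Φf/∂ψ)(φ, ψ); that is, the map Φ intertwines the operator of multiplication by the coordinate x on S(ℝ) with the operator −i(θ/2π)∂/∂ψ + φ on functions on ℝ². -/

import Mathlib

open Complex SchwartzMap

/-- The transform `Φf(φ, ψ) = Σ_{n ∈ ℤ} f(φ + θn) · exp(2πi n ψ)`. -/
noncomputable def Phi (θ : ℝ) (f : SchwartzMap ℝ ℂ) : ℝ × ℝ → ℂ :=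
  fun p => ∑' n : ℤ, f (p.1 + θ * n) * Complex.exp (2 * Real.pi * Complex.I * n * p.2)

/-!
For fixed `φ`, the function `ψ ↦ Φf(φ, ψ)` is a Fourier series with coefficients `f(φ + θn)`. They
decay rapidly, so the series may be differentiated term by term, and `∂/∂ψ` multiplies the `n`-th
coefficient by `2πi n`. Since the `n`-th coefficient of `Φ(x·f)` is `(φ + θn) f(φ + θn)`, the
summand `φ` gives `φ·Φf` and the summand `θn` gives `θ/(2πi) · ∂Φf/∂ψ`.
-/

section SchwartzSampling

variable {E : Type*} [NormedAddCommGroup E] [NormedSpace ℝ E]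

theorem summable_pow_mul_norm_schwartzMap_intCast (f : 𝓢(ℝ, E)) (k : ℕ) :
    Summable fun n : ℤ => |(n : ℝ)| ^ k * ‖f n‖ := by
  obtain ⟨C, -, hC⟩ := f.decay (k + 2) 0
  refine Summable.of_norm_bounded_eventually
    ((Real.summable_one_div_int_pow.2 one_lt_two).mul_left C) ?_
  filter_upwards [Filter.eventually_cofinite_ne 0] with n hn
  have hdecay : |(n : ℝ)| ^ (k + 2) * ‖f n‖ ≤ C := by
    simpa only [norm_iteratedFDeriv_zero, Real.norm_eq_abs] using hC n
  rw [Real.norm_of_nonneg (by positivity), mul_one_div, le_div_iff₀ (by positivity)]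
  calc |(n : ℝ)| ^ k * ‖f n‖ * (n : ℝ) ^ 2 = |(n : ℝ)| ^ (k + 2) * ‖f n‖ := by
        rw [← sq_abs (n : ℝ)]; ring
    _ ≤ C := hdecay

theorem antilipschitzWith_const_add_mul {a : ℝ} (ha : a ≠ 0) (b : ℝ) :
    AntilipschitzWith ‖a‖₊⁻¹ fun x : ℝ => b + a * x :=
  AntilipschitzWith.of_le_mul_dist fun x y => by
    simp only [Real.dist_eq, add_sub_add_left_eq_sub, ← mul_sub, abs_mul, NNReal.coe_inv,
      coe_nnnorm, Real.norm_eq_abs]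
    rw [inv_mul_cancel_left₀ (abs_ne_zero.2 ha)]

theorem summable_pow_mul_norm_schwartzMap_add_mul_intCast {a : ℝ} (ha : a ≠ 0) (f : 𝓢(ℝ, E))
    (b : ℝ) (k : ℕ) : Summable fun n : ℤ => |(n : ℝ)| ^ k * ‖f (b + a * n)‖ :=
  summable_pow_mul_norm_schwartzMap_intCast
    (compCLMOfAntilipschitz ℝ (by fun_prop) (antilipschitzWith_const_add_mul ha b) f) k

end SchwartzSampling

section FourierSeries

variable {T : ℝ} {c : ℤ → ℂ}

theorem norm_fourier_apply (n : ℤ) (x : AddCircle T) : ‖fourier n x‖ = 1 :=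
  Circle.norm_coe _

theorem summable_mul_fourier (hc : Summable c) (x : AddCircle T) :
    Summable fun n => c n * fourier n x :=
  .of_norm_bounded hc.norm fun n => by rw [norm_mul, norm_fourier_apply, mul_one]

theorem summable_of_summable_intCast_mul (hc : Summable fun n : ℤ => n * c n) : Summable c := by
  refine Summable.of_norm_bounded_eventually hc.norm ?_
  filter_upwards [Filter.eventually_cofinite_ne 0] with n hn
  have one_le_norm : 1 ≤ ‖(n : ℂ)‖ := by
    rw [norm_intCast]
    exact_mod_cast Int.one_le_abs hn
  rw [norm_mul]
  exact le_mul_of_one_le_left (norm_nonneg _) one_le_norm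

theorem hasDerivAt_tsum_mul_fourier (hc : Summable fun n : ℤ => n * c n) (t : ℝ) :
    HasDerivAt (fun s : ℝ => ∑' n, c n * fourier n (s : AddCircle T))
      (2 * Real.pi * I / T * ∑' n : ℤ, n * c n * fourier n (t : AddCircle T)) t := by
  have hterm (n : ℤ) (s : ℝ) : HasDerivAt (fun s : ℝ => c n * fourier n (s : AddCircle T))
      (2 * Real.pi * I / T * (n * c n * fourier n (s : AddCircle T))) s :=
    ((hasDerivAt_fourier T n s).const_mul (c n)).congr_deriv (by ring)
  have hbound (n : ℤ) (s : ℝ) :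
      ‖2 * Real.pi * I / T * (n * c n * fourier n (s : AddCircle T))‖
        ≤ ‖2 * Real.pi * I / T‖ * ‖n * c n‖ := by
    rw [norm_mul, norm_mul _ (fourier n _), norm_fourier_apply, mul_one]
  have hsum : Summable fun n => c n * fourier n (t : AddCircle T) :=
    summable_mul_fourier (summable_of_summable_intCast_mul hc) _
  rw [← tsum_mul_left]
  exact hasDerivAt_tsum (hc.norm.mul_left _) hterm hbound hsum t

end FourierSeries

section Phi

variable {θ : ℝ}

theorem Phi_eq_tsum_mul_fourier (f : 𝓢(ℝ, ℂ)) (φ ψ : ℝ) :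
    Phi θ f (φ, ψ) = ∑' n : ℤ, f (φ + θ * n) * fourier n (ψ : UnitAddCircle) := by
  simp only [Phi, fourier_coe_apply, ofReal_one, div_one]

theorem summable_intCast_mul_schwartzMap_add_mul (hθ : θ ≠ 0) (f : 𝓢(ℝ, ℂ)) (φ : ℝ) :
    Summable fun n : ℤ => (n : ℂ) * f (φ + θ * n) :=
  .of_norm <| by
    simpa only [norm_mul, norm_intCast, pow_one] using
      summable_pow_mul_norm_schwartzMap_add_mul_intCast hθ f φ 1

theorem hasDerivAt_Phi (hθ : θ ≠ 0) (f : 𝓢(ℝ, ℂ)) (φ ψ : ℝ) :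
    HasDerivAt (fun t : ℝ => Phi θ f (φ, t))
      (2 * Real.pi * I * ∑' n : ℤ, n * f (φ + θ * n) * fourier n (ψ : UnitAddCircle)) ψ := by
  simpa only [Phi_eq_tsum_mul_fourier, ofReal_one, div_one] using
    hasDerivAt_tsum_mul_fourier (T := 1) (summable_intCast_mul_schwartzMap_add_mul hθ f φ) ψ

theorem Phi_of_eq_mul (hθ : θ ≠ 0) {f xf : 𝓢(ℝ, ℂ)} (hxf : ∀ x : ℝ, xf x = x * f x)
    (φ ψ : ℝ) :
    Phi θ xf (φ, ψ) = φ * Phi θ f (φ, ψ)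
      + θ * ∑' n : ℤ, n * f (φ + θ * n) * fourier n (ψ : UnitAddCircle) := by
  have hsum := summable_intCast_mul_schwartzMap_add_mul hθ f φ
  simp only [Phi_eq_tsum_mul_fourier]
  rw [← tsum_mul_left, ← tsum_mul_left, ← Summable.tsum_add
    ((summable_mul_fourier (summable_of_summable_intCast_mul hsum) _).mul_left _)
    ((summable_mul_fourier hsum _).mul_left _)]
  refine tsum_congr fun n => ?_
  rw [hxf]
  push_cast
  ring

end Phi

theorem stmt5_general {θ : ℝ} (hθ : θ ≠ 0) {f xf : 𝓢(ℝ, ℂ)}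
    (hxf : ∀ x : ℝ, xf x = (x : ℂ) * f x) (φ ψ : ℝ) :
    Phi θ xf (φ, ψ)
      = (φ : ℂ) * Phi θ f (φ, ψ)
        - I * ((θ : ℂ) / (2 * Real.pi)) * deriv (fun t : ℝ => Phi θ f (φ, t)) ψ := by
  have hpi : (Real.pi : ℂ) ≠ 0 := ofReal_ne_zero.2 Real.pi_ne_zero
  rw [(hasDerivAt_Phi hθ f φ ψ).deriv, Phi_of_eq_mul hθ hxf]
  field_simp
  rw [I_sq]
  ring

theorem stmt5 (θ : ℝ) (hθ0 : 0 < θ) (hθ1 : θ ≤ 1) (f xf : SchwartzMap ℝ ℂ)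
    (hxf : ∀ x : ℝ, xf x = (x : ℂ) * f x) :
    ∀ φ ψ : ℝ, Phi θ xf (φ, ψ)
      = (φ : ℂ) * Phi θ f (φ, ψ)
        - Complex.I * ((θ : ℂ) / (2 * Real.pi)) * deriv (fun t : ℝ => Phi θ f (φ, t)) ψ :=
  stmt5_general hθ0.ne' hxf
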